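/- arXiv:2507.08796 — 4 statements merged into one kernel-verified Lean document; each statement's English description precedes it below -/
import Mathlib

section
/- Let f be a natural filter-equivariant polymorphic list function and let k be the length of f applied to a one-element list (say k = (f Unit [()]).length). Then for every type α with decidable equality and every list xs : List α, the length of f α xs equals k times the length of xs; moreover, for every x : α, if x occurs m times in xs then x occurs k * m times in f α xs (i.e. (f α xs).count x = k * xs.count x). -/
/-- A function `f : List α → List α` is filter-equivariant if it commutes with
`List.filter p` for every Boolean predicate `p`. -/
def FilterEquivariant {α : Type} (f : List α → List α) : Prop :=
  ∀ (p : α → Bool) (xs : List α), f (xs.filter p) = (f xs).filter p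

/-- A polymorphic list function is natural (map-equivariant) if it commutes with
`List.map g` for every `g`. -/
def Natural (f : ∀ α : Type, List α → List α) : Prop :=
  ∀ (α β : Type) (g : α → β) (xs : List α), f β (xs.map g) = (f α xs).map g

/-- A polymorphic list function is natural filter-equivariant (NFE) if it is natural
and each component is filter-equivariant. -/
def NFE (f : ∀ α : Type, List α → List α) : Prop :=
  Natural f ∧ ∀ α : Type, FilterEquivariant (f α)

theorem nfe_len_of_len (f : ∀ α : Type, List α → List α) (hf : NFE f)
    (α β : Type) (xs : List α) (ys : List β) (h : xs.length = ys.length) :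
    (f α xs).length = (f β ys).length := by
  have h1 := congrArg List.length (hf.1 α Unit (fun _ => ()) xs)
  have h2 := congrArg List.length (hf.1 β Unit (fun _ => ()) ys)
  rw [List.length_map] at h1 h2
  rw [← h1, ← h2, List.map_const', List.map_const', h]

theorem nfe_len (f : ∀ α : Type, List α → List α) (hf : NFE f) (n : ℕ) :
    (f Bool (List.replicate n false)).length = (f Unit [()]).length * n := by
  induction n with
  | zero =>
    have h := hf.2 Bool (fun _ => false) []
    have h' : f Bool [] = [] := by simpa using h
    simp [h']
  | succ n ih =>
    rw [nfe_len_of_len f hf Bool Bool (List.replicate (n+1) false)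
      (true :: List.replicate n false) (by simp)]
    have h1 := hf.2 Bool (fun b => b) (true :: List.replicate n false)
    have h2 := hf.2 Bool (fun b => !b) (true :: List.replicate n false)
    have e1 : (true :: List.replicate n false).filter (fun b => b) = [true] := by simp
    have e2 : (true :: List.replicate n false).filter (fun b => !b)
      = List.replicate n false := by simp
    rw [e1] at h1
    rw [e2] at h2
    have h3 := List.length_eq_length_filter_add (l := f Bool (true :: List.replicate n false))
      (fun b => b)
    rw [h3, ← h1, ← h2, ih, nfe_len_of_len f hf Bool Unit [true] [()] rfl]
    ring

theorem nfe_length_and_count (f : ∀ α : Type, List α → List α) (hf : NFE f)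
    (k : ℕ) (hk : k = (f Unit [()]).length)
    (α : Type) [DecidableEq α] (xs : List α) :
    (f α xs).length = k * xs.length ∧
    ∀ x : α, (f α xs).count x = k * xs.count x := by
  have key : ∀ ys : List α, (f α ys).length = k * ys.length := fun ys => by
    rw [nfe_len_of_len f hf α Bool ys (List.replicate ys.length false) (by simp),
      nfe_len f hf, hk]
  refine ⟨key xs, fun x => ?_⟩
  rw [List.count_eq_length_filter, List.count_eq_length_filter, ← hf.2 α, key]
end

section
/- Let f be a natural filter-equivariant polymorphic list function that maps singleton lists to lists of length 1 (a 1-NFE, i.e. (f Unit [()]).length = 1). Then either f α is the identity function on List α for every type α, or f α is List.reverse for every type α. -/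
theorem nfe_single (f : ∀ α : Type, List α → List α) (hf : NFE f)
    (h1 : (f Unit [()]).length = 1) (α : Type) (a : α) : f α [a] = [a] := by
  have h := hf.1 Unit α (fun _ => a) [()]
  obtain ⟨u, hu⟩ := List.length_eq_one_iff.mp h1
  simpa [hu] using h

theorem nfe_nil (f : ∀ α : Type, List α → List α) (hf : NFE f) (α : Type) : f α [] = [] := by
  have h := hf.2 α (fun _ => false) []
  simpa using h

theorem nfe_id (f : ∀ α : Type, List α → List α) (hf : NFE f)
    (h1 : (f Unit [()]).length = 1) (h2 : f ℕ [0, 1] = [0, 1]) (α : Type) (xs : List α) :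
    f α xs = xs := by
  have small : ∀ l : List ℕ, l.length ≤ 2 → f ℕ l = l := by
    intro l hl
    match l, hl with
    | [], _ => exact nfe_nil f hf ℕ
    | [a], _ => exact nfe_single f hf h1 ℕ a
    | [a, b], _ =>
      have h := hf.1 ℕ ℕ (fun i => if i = 0 then a else b) [0, 1]
      simpa [h2] using h
    | _ :: _ :: _ :: _, h => simp at h
  have key : ∀ n a b : ℕ, (f ℕ (List.range n)).filter (fun x => decide (x = a ∨ x = b))
      = (List.range n).filter (fun x => decide (x = a ∨ x = b)) := by
    intro n a b
    rw [← hf.2 ℕ]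
    apply small
    have nd : ((List.range n).filter (fun x => decide (x = a ∨ x = b))).Nodup :=
      List.nodup_range.filter _
    have hs : (List.range n).filter (fun x => decide (x = a ∨ x = b)) ⊆ [a, b] := by
      intro x hx
      simpa using (List.mem_filter.mp hx).2
    exact (nd.subperm hs).length_le
  have hmem : ∀ n a : ℕ, a ∈ f ℕ (List.range n) ↔ a ∈ List.range n := by
    intro n a
    have h := congrArg (fun l => a ∈ l) (key n a a)
    simpa using h
  have hsort : ∀ n : ℕ, (f ℕ (List.range n)).Pairwise (· < ·) := by
    intro n
    rw [List.pairwise_iff_forall_sublist]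
    intro a b hab
    have h := hab.filter (fun x => decide (x = a ∨ x = b))
    rw [key] at h
    have h' := h.trans List.filter_sublist
    simp only [List.filter_cons, true_or, or_true, decide_true, if_true, List.filter_nil] at h'
    exact List.pairwise_iff_forall_sublist.mp (List.pairwise_lt_range (n := n)) h'
  have hr : ∀ n : ℕ, f ℕ (List.range n) = List.range n := by
    intro n
    have hs := hsort n
    have hp : (f ℕ (List.range n)).Perm (List.range n) :=
      (List.perm_ext_iff_of_nodup (hs.imp (fun h => ne_of_lt h)) List.nodup_range).mpr (hmem n)
    exact hp.eq_of_pairwise (fun a b _ _ h h' => absurd h (lt_asymm h')) hs List.pairwise_lt_range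
  cases xs with
  | nil => exact nfe_nil f hf α
  | cons x t =>
    have h := hf.1 ℕ α (fun i => (x :: t).getD i x) (List.range (x :: t).length)
    have e : (List.range (x :: t).length).map (fun i => (x :: t).getD i x) = x :: t := by
      apply List.ext_getElem
      · simp
      · intro i h1 h2
        simp only [List.getElem_map, List.getElem_range]
        exact List.getD_eq_getElem _ _ h2
    rw [hr, e] at h
    exact h

theorem nfe_pair (f : ∀ α : Type, List α → List α) (hf : NFE f)
    (h1 : (f Unit [()]).length = 1) : f ℕ [0, 1] = [0, 1] ∨ f ℕ [0, 1] = [1, 0] := by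
  have h0 := hf.2 ℕ (fun x => decide (x = 0)) [0, 1]
  have h1' := hf.2 ℕ (fun x => decide (x = 1)) [0, 1]
  have h2 := hf.2 ℕ (fun x => decide (x ≠ 0 ∧ x ≠ 1)) [0, 1]
  simp [nfe_nil f hf, nfe_single f hf h1, List.filter_cons] at h0 h1' h2
  have hp : (f ℕ [0, 1]).Perm [0, 1] := by
    rw [List.perm_iff_count]
    intro a
    by_cases a0 : a = 0
    · subst a0
      rw [← List.count_filter (p := fun x => decide (x = 0)) (by simp), ← h0]; simp
    by_cases a1 : a = 1
    · subst a1
      rw [← List.count_filter (p := fun x => decide (x = 1)) (by simp), ← h1']; simp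
    have : a ∉ f ℕ [0, 1] := fun h => by
      have := h2 a h
      tauto
    rw [List.count_eq_zero_of_not_mem this, List.count_eq_zero_of_not_mem (by simp [a0, a1])]
  have hl := hp.length_eq
  obtain ⟨a, b, hab⟩ := List.length_eq_two.mp hl
  rw [hab] at hp ⊢
  have ha := hp.subset (a := a) (by simp)
  have hb := hp.subset (a := b) (by simp)
  have hn := hp.nodup_iff.mpr (by simp)
  simp at ha hb hn ⊢
  omega

theorem one_nfe_is_id_or_reverse (f : ∀ α : Type, List α → List α) (hf : NFE f)
    (h1 : (f Unit [()]).length = 1) :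
    (∀ (α : Type) (xs : List α), f α xs = xs) ∨
    (∀ (α : Type) (xs : List α), f α xs = xs.reverse) := by
  rcases nfe_pair f hf h1 with h | h
  · exact Or.inl (nfe_id f hf h1 h)
  · right
    intro α xs
    have := nfe_id (fun α xs => (f α xs).reverse)
      ⟨fun α β g xs => by simp [hf.1 α β g xs], fun α p xs => by simp [hf.2 α p xs]⟩
      (by simpa using h1) (by simp [h]) α xs
    exact List.reverse_eq_iff.mp this
end

section
/- For every natural number k ≥ 1, the number of k-NFEs is exactly 2 * 3^(k-1); that is, the collection of natural filter-equivariant polymorphic list functions f with (f Unit [()]).length = k has cardinality 2 * 3^(k-1) (where two such functions are identified when they agree at every type on every list). -/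
namespace KNFE

/-- a block: direction and multiplicity minus one -/
def blk (p : Bool × ℕ) {α : Type} (xs : List α) : List α :=
  (if p.1 then xs.reverse else xs).flatMap (List.replicate (p.2 + 1))

def ev (c : List (Bool × ℕ)) (α : Type) (xs : List α) : List α :=
  c.flatMap (fun p => blk p xs)

def sz (c : List (Bool × ℕ)) : ℕ := (c.map (fun p => p.2 + 1)).sum

theorem rep_map {α β : Type} (g : α → β) (n : ℕ) (xs : List α) :
    (xs.map g).flatMap (List.replicate n) = (xs.flatMap (List.replicate n)).map g := by
  induction xs with
  | nil => rfl
  | cons a t ih => simp [ih]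

theorem rep_filter {α : Type} (p : α → Bool) (n : ℕ) (xs : List α) :
    (xs.filter p).flatMap (List.replicate n) = (xs.flatMap (List.replicate n)).filter p := by
  induction xs with
  | nil => rfl
  | cons a t ih =>
    by_cases h : p a
    · simp [h, ih, List.filter_replicate]
    · simp [h, ih, List.filter_replicate]

theorem blk_map {α β : Type} (q : Bool × ℕ) (g : α → β) (xs : List α) :
    blk q (xs.map g) = (blk q xs).map g := by
  rcases q with ⟨_ | _, m⟩
  · simpa [blk] using rep_map g (m+1) xs
  · simpa [blk] using rep_map g (m+1) xs.reverse

theorem blk_filter {α : Type} (q : Bool × ℕ) (p : α → Bool) (xs : List α) :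
    blk q (xs.filter p) = (blk q xs).filter p := by
  rcases q with ⟨_ | _, m⟩
  · simpa [blk] using rep_filter p (m+1) xs
  · simpa [blk] using rep_filter p (m+1) xs.reverse

theorem ev_nfe (c : List (Bool × ℕ)) : NFE (ev c) := by
  constructor
  · intro α β g xs
    induction c with
    | nil => rfl
    | cons q c ih => simp only [ev, List.flatMap_cons, List.map_append] at *; rw [ih, blk_map]
  · intro α p xs
    induction c with
    | nil => rfl
    | cons q c ih => simp only [ev, List.flatMap_cons, List.filter_append] at *; rw [ih, blk_filter]

theorem ev_length (c : List (Bool × ℕ)) : (ev c Unit [()]).length = sz c := by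
  induction c with
  | nil => rfl
  | cons q c ih =>
    simp only [ev, sz, List.flatMap_cons, List.length_append, List.map_cons, List.sum_cons] at *
    rw [ih]; rcases q with ⟨_ | _, m⟩ <;> simp [blk]

theorem ev_word_cons (b : Bool) (m : ℕ) (c : List (Bool × ℕ)) :
    ev ((b, m) :: c) Bool [false, true] =
      List.replicate (m+1) b ++ (List.replicate (m+1) (!b) ++ ev c Bool [false, true]) := by
  cases b <;> simp [ev, blk]

theorem split_unique {α : Type} (a : α) : ∀ (l l' r r' : List α), a ∉ l → a ∉ l' →
    l ++ a :: r = l' ++ a :: r' → l = l' ∧ r = r'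
  | [], [], _, _, _, _, h => by simpa using h
  | [], y :: l', r, r', _, h2, h => by simp at h h2; exact absurd h.1 h2.1
  | y :: l, [], r, r', h2, _, h => by simp at h h2; exact absurd h.1.symm h2.1
  | x :: l, y :: l', r, r', h1, h2, h => by
    simp only [List.mem_cons, not_or, List.cons_append, List.cons.injEq] at h h1 h2
    have := split_unique a l l' r r' h1.2 h2.2 h.2
    simp [h.1, this]

theorem word_inj : ∀ (c c' : List (Bool × ℕ)),
    ev c Bool [false, true] = ev c' Bool [false, true] → c = c'
  | [], [], _ => rfl
  | [], (b, m) :: c, h => by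
    rw [ev_word_cons] at h; simp [ev, List.replicate_succ] at h
  | (b, m) :: c, [], h => by
    rw [ev_word_cons] at h; simp [ev, List.replicate_succ] at h
  | (b, m) :: c, (b', m') :: c', h => by
    rw [ev_word_cons, ev_word_cons] at h
    have hb : b = b' := by
      simp only [List.replicate_succ, List.cons_append, List.cons.injEq] at h
      exact h.1
    subst hb
    have h' := h
    rw [List.replicate_succ (a := !b) (n := m), List.replicate_succ (a := !b) (n := m')] at h'
    simp only [List.cons_append] at h'
    have := (split_unique (!b) _ _ _ _ (by simp [List.mem_replicate])
      (by simp [List.mem_replicate]) h').1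
    have hm : m = m' := by simpa using congrArg List.length this
    subst hm
    have := word_inj c c' (by simpa using h)
    rw [this]

theorem ext_pairs {α : Type} [DecidableEq α] : ∀ (L L' : List α),
    (∀ a b : α, L.filter (fun x => decide (x = a ∨ x = b)) =
      L'.filter (fun x => decide (x = a ∨ x = b))) → L = L'
  | [], [], _ => rfl
  | [], y :: t, h => by have := h y y; simp at this
  | y :: t, [], h => by have := h y y; simp at this
  | x :: t, y :: t', h => by
    have hxy : x = y := by have := h x y; simp at this; exact this.1
    subst hxy
    rw [ext_pairs t t']
    intro a b
    have := h a b
    by_cases hx : x = a ∨ x = b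
    · simpa [List.filter_cons, hx] using this
    · simpa [List.filter_cons, hx] using this

theorem short_eq {f g : ∀ α : Type, List α → List α} (hf : NFE f) (hg : NFE g)
    (h : f Bool [false, true] = g Bool [false, true]) {α : Type} (xs : List α)
    (hx : xs.length ≤ 2) : f α xs = g α xs := by
  have key : ∀ (p : Bool → Bool) (k : Bool → α),
      f α (([false, true].filter p).map k) = g α (([false, true].filter p).map k) := by
    intro p k
    rw [hf.1, hg.1, hf.2, hg.2, h]
  match xs, hx with
  | [], _ =>
    have h0 : f Bool [] = g Bool [] := by
      have e1 := hf.2 Bool (fun _ => false) [false, true]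
      have e2 := hg.2 Bool (fun _ => false) [false, true]
      simp at e1 e2
      rw [e1, e2]
    have e1 := hf.1 Empty α Empty.elim []
    have e2 := hg.1 Empty α Empty.elim []
    have : ∀ l : List Empty, l = [] := by
      intro l; cases l with
      | nil => rfl
      | cons a _ => exact a.elim
    simp only [this (f Empty []), this (g Empty []), List.map_nil] at e1 e2
    rw [e1, e2]
  | [a], _ => simpa using key (fun b => b) (fun _ => a)
  | [a, b], _ => simpa using key (fun _ => true) (fun t => if t then b else a)
  | a :: b :: c :: t, hx => simp at hx

theorem nfe_ext {f g : ∀ α : Type, List α → List α} (hf : NFE f) (hg : NFE g)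
    (h : f Bool [false, true] = g Bool [false, true]) : f = g := by
  funext α xs
  have hr : ∀ n, f (Fin n) (List.finRange n) = g (Fin n) (List.finRange n) := by
    intro n
    apply ext_pairs
    intro a b
    rw [← hf.2, ← hg.2]
    apply short_eq hf hg h
    have hn : ((List.finRange n).filter (fun x => decide (x = a ∨ x = b))).Nodup :=
      (List.nodup_finRange n).filter _
    rw [← List.toFinset_card_of_nodup hn]
    refine le_trans (Finset.card_le_card (t := {a, b}) ?_) Finset.card_le_two
    intro x; simp
  have : xs = (List.finRange xs.length).map xs.get := by simp
  rw [this, hf.1, hg.1, hr]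

/-- compatibility of a three letter word with a two letter word -/
def Pj (x y z : Fin 3) (W : List (Fin 3)) (w : List Bool) : Prop :=
  W.filter (fun a => decide (a ≠ z)) = w.map (fun b => cond b y x) ∧
  W.filter (fun a => decide (a ≠ y)) = w.map (fun b => cond b z x) ∧
  W.filter (fun a => decide (a ≠ x)) = w.map (fun b => cond b z y)

theorem Pj.swap {x y z W w} (h : Pj x y z W w) : Pj z y x W (w.map not) := by
  obtain ⟨h1, h2, h3⟩ := h
  refine ⟨?_, ?_, ?_⟩
  · rw [h3, List.map_map]; congr 1; funext b; cases b <;> rfl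
  · rw [h2, List.map_map]; congr 1; funext b; cases b <;> rfl
  · rw [h1, List.map_map]; congr 1; funext b; cases b <;> rfl

theorem first_true : ∀ w : List Bool, true ∈ w → ∃ m r, w = List.replicate m false ++ true :: r
  | [], h => by simp at h
  | true :: r, _ => ⟨0, r, by simp⟩
  | false :: r, h => by
    obtain ⟨m, s, e⟩ := first_true r (by simpa using h)
    exact ⟨m+1, s, by rw [e]; simp [List.replicate_succ]⟩

theorem prefA (x y : Fin 3) (hxy : x ≠ y) (n : ℕ) (R s : List (Fin 3)) : ∀ (m : ℕ) (A : List (Fin 3)),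
    A ++ R = List.replicate m x ++ y :: s →
    A.filter (fun a => decide (a ≠ y)) = List.replicate m x →
    A.filter (fun a => decide (a ≠ x)) = List.replicate n y →
    A = List.replicate m x ++ List.replicate n y
  | 0, A, _, h1, h2 => by
    rw [← h2]
    simp only [List.replicate_zero, List.nil_append, List.filter_eq_nil_iff] at *
    symm
    rw [List.filter_eq_self]
    intro a ha
    have := h1 a ha
    simp at this
    simp [this, hxy.symm]
  | m+1, [], _, h1, _ => by simp [List.replicate_succ] at h1
  | m+1, a :: A, h, h1, h2 => by
    rw [List.replicate_succ] at h ⊢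
    simp only [List.cons_append, List.cons.injEq] at h
    obtain ⟨rfl, h⟩ := h
    rw [List.cons_append, ← prefA a y hxy n R s m A h]
    · simpa [List.filter_cons, hxy, List.replicate_succ] using h1
    · simpa [List.filter_cons] using h2

theorem peel (x y z : Fin 3) (hxy : x ≠ y) (hxz : x ≠ z) (hyz : y ≠ z) (s t : List (Fin 3)) :
    ∀ (m : ℕ) (B : List (Fin 3)),
    B.filter (fun a => decide (a ≠ y)) = List.replicate m z ++ s →
    B.filter (fun a => decide (a ≠ x)) = List.replicate m z ++ t →
    ∃ V, B = List.replicate m z ++ V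
  | 0, B, _, _ => ⟨B, by simp⟩
  | m+1, [], h, _ => by simp [List.replicate_succ] at h
  | m+1, a :: B, h1, h2 => by
    rw [List.replicate_succ] at *
    have ha : a = z := by
      by_cases hay : a = y
      · have : a ≠ x := by rw [hay]; exact hxy.symm
        simp [List.filter_cons, this] at h2
        exact h2.1
      · simp [List.filter_cons, hay] at h1
        exact h1.1
    subst ha
    obtain ⟨V, hV⟩ := peel x y a hxy hxz hyz s t m B
      (by simpa [List.filter_cons, hyz.symm] using h1)
      (by simpa [List.filter_cons, hxz.symm] using h2)
    exact ⟨V, by rw [hV]; simp⟩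

theorem core (x y z : Fin 3) (hxy : x ≠ y) (hxz : x ≠ z) (hyz : y ≠ z)
    (T : List (Fin 3)) (w : List Bool) (h : Pj x y z (x :: T) w) :
    ∃ m V w', w = List.replicate (m+1) false ++ (List.replicate (m+1) true ++ w') ∧
      Pj x y z V w' ∧ V.length ≤ T.length := by
  obtain ⟨h1, h2, h3⟩ := h
  -- w starts with false
  obtain ⟨w0, rfl⟩ : ∃ w0, w = false :: w0 := by
    cases w with
    | nil => simp [hxz] at h1
    | cons b w0 =>
      cases b
      · exact ⟨w0, rfl⟩
      · simp [hxz] at h1; exact absurd h1.1 hxy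
  have hy : y ∈ (x :: T) := by
    have : y ∈ (x :: T).filter (fun a => decide (a ≠ x)) := by rw [h3]; simp
    exact (List.mem_filter.1 this).1
  have ht : true ∈ (false :: w0) := by
    have : y ∈ (x :: T).filter (fun a => decide (a ≠ z)) := by
      rw [List.mem_filter]; exact ⟨hy, by simpa using hyz⟩
    rw [h1, List.mem_map] at this
    obtain ⟨b, hb, e⟩ := this
    cases b
    · exact absurd e hxy
    · exact hb
  obtain ⟨m, r, hw⟩ := first_true _ ht
  obtain ⟨m', rfl⟩ : ∃ m', m = m' + 1 := by
    cases m with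
    | zero => simp at hw
    | succ m' => exact ⟨m', rfl⟩
  rw [hw] at h1 h2 h3 ⊢
  have hz : z ∈ (x :: T) := by
    have : z ∈ (x :: T).filter (fun a => decide (a ≠ x)) := by rw [h3]; simp
    exact (List.mem_filter.1 this).1
  obtain ⟨A, B, hW, hzA⟩ := List.eq_append_cons_of_mem hz
  have hlen : A.length + B.length = T.length := by
    have := congrArg List.length hW
    simp at this; omega
  rw [hW] at h1 h2 h3
  simp only [List.filter_append, List.map_append, List.map_cons, List.map_replicate, cond_true,
    cond_false] at h1 h2 h3
  rw [List.filter_cons_of_pos (by simpa using hyz.symm)] at h2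
  rw [List.filter_cons_of_pos (by simpa using hxz.symm)] at h3
  rw [List.filter_cons_of_neg (by simp)] at h1
  obtain ⟨a2, b2⟩ := split_unique z _ _ _ _ (fun hh => hzA (List.mem_filter.1 hh).1)
    (by simp [List.mem_replicate, hxz.symm]) h2
  obtain ⟨a3, b3⟩ := split_unique z _ _ _ _ (fun hh => hzA (List.mem_filter.1 hh).1)
    (by simp [List.mem_replicate, hyz.symm]) h3
  have hAA : A.filter (fun a => decide (a ≠ z)) = A := by
    rw [List.filter_eq_self]; intro a ha
    have : a ≠ z := fun e => hzA (e ▸ ha)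
    simpa using this
  rw [hAA] at h1
  have hA := prefA x y hxy (m'+1) _ _ (m'+1) A h1 a2 a3
  rw [hA, List.append_assoc, List.append_cancel_left_eq, List.replicate_succ, List.cons_append,
    List.cons.injEq] at h1
  have h1 := h1.2
  obtain ⟨r1, w', rfl, e1, e2⟩ := List.map_eq_append_iff.1 h1.symm
  have hr1 : r1 = List.replicate m' true := by
    rw [List.eq_replicate_iff] at e1 ⊢
    refine ⟨by simpa using e1.1, fun b hb => ?_⟩
    have := e1.2 _ (List.mem_map_of_mem hb)
    cases b
    · exact absurd this hxy
    · rfl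
  subst hr1
  simp only [List.map_append, List.map_replicate, cond_true] at b2 b3
  obtain ⟨V, rfl⟩ := peel x y z hxy hxz hyz _ _ m' B b2 b3
  refine ⟨m', V, w', by simp [List.replicate_succ], ⟨?_, ?_, ?_⟩, ?_⟩
  · rw [e2]; simp [List.filter_append, List.filter_replicate]
  · simpa [List.filter_append, List.filter_replicate, hyz.symm] using b2
  · simpa [List.filter_append, List.filter_replicate, hxz.symm] using b3
  · simp at hlen; omega

theorem word_surj : ∀ (n : ℕ) (W : List (Fin 3)) (w : List Bool), W.length ≤ n →
    Pj 0 1 2 W w → ∃ c, ev c Bool [false, true] = w := by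
  intro n
  induction n with
  | zero =>
    intro W w hl h
    have : W = [] := by simpa using hl
    subst this
    have := h.1
    refine ⟨[], ?_⟩
    have : w = [] := by simpa using this
    rw [this]; rfl
  | succ n ih =>
    intro W w hl h
    cases W with
    | nil =>
      have := h.1
      refine ⟨[], ?_⟩
      have : w = [] := by simpa using this
      rw [this]; rfl
    | cons a T =>
      simp only [List.length_cons, Nat.add_le_add_iff_right] at hl
      have ha : a = 0 ∨ a = 1 ∨ a = 2 := by clear h; revert a; decide
      rcases ha with rfl | rfl | rfl
      · obtain ⟨m, V, w', e, hP, hV⟩ := core 0 1 2 (by decide) (by decide) (by decide) T w h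
        obtain ⟨c, hc⟩ := ih V w' (hV.trans hl) hP
        exact ⟨(false, m) :: c, by rw [ev_word_cons, hc, e]; rfl⟩
      · exfalso
        obtain ⟨h1, h2, h3⟩ := h
        cases w with
        | nil => simp at h1
        | cons b w =>
          cases b
          · simp at h1
          · simp at h3
      · obtain ⟨m, V, w', e, hP, hV⟩ :=
          core 2 1 0 (by decide) (by decide) (by decide) T _ h.swap
        obtain ⟨c, hc⟩ := ih V _ (hV.trans hl) hP.swap
        refine ⟨(true, m) :: c, ?_⟩
        rw [ev_word_cons, hc]
        have := congrArg (List.map not) e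
        simpa [List.map_map, Function.comp_def] using this.symm

theorem nfe_code {f : ∀ α : Type, List α → List α} (hf : NFE f) : ∃ c, ev c = f := by
  have key : Pj 0 1 2 (f (Fin 3) [0, 1, 2]) (f Bool [false, true]) := by
    refine ⟨?_, ?_, ?_⟩
    · rw [← hf.2, ← hf.1]; rfl
    · rw [← hf.2, ← hf.1]; rfl
    · rw [← hf.2, ← hf.1]; rfl
  obtain ⟨c, hc⟩ := word_surj _ _ _ le_rfl key
  exact ⟨c, nfe_ext (ev_nfe c) hf hc⟩

def S (k : ℕ) : Type := {c : List (Bool × ℕ) // sz c = k}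

def step (k : ℕ) : Option Bool × S (k+1) → S (k+2)
  | (some b, ⟨c, h⟩) => ⟨(b, 0) :: c, by simp [sz] at *; omega⟩
  | (none, ⟨(b, m) :: c, h⟩) => ⟨(b, m+1) :: c, by simp [sz] at *; omega⟩
  | (none, ⟨[], h⟩) => absurd h (by simp [sz])

theorem step_bij (k : ℕ) : Function.Bijective (step k) := by
  constructor
  · rintro ⟨_ | b, ⟨_ | ⟨⟨d, m⟩, c⟩, h⟩⟩ ⟨_ | b', ⟨_ | ⟨⟨d', m'⟩, c'⟩, h'⟩⟩ e <;>
      simp only [sz, List.map_nil, List.sum_nil] at h h' <;> first | omega | skip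
    all_goals
      have e := congrArg Subtype.val e
      simp [step] at e
      try simp [e]
  · rintro ⟨_ | ⟨⟨d, m⟩, c⟩, h⟩
    · simp [sz] at h
    · cases m with
      | zero => exact ⟨(some d, ⟨c, by simp [sz] at *; omega⟩), rfl⟩
      | succ m => exact ⟨(none, ⟨(d, m) :: c, by simp [sz] at *; omega⟩), rfl⟩

theorem card_S (k : ℕ) : Nat.card (S (k+1)) = 2 * 3 ^ k := by
  induction k with
  | zero =>
    let g : Bool → S 1 := fun b => ⟨[(b, 0)], by simp [sz]⟩
    have hg : Function.Bijective g := by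
      constructor
      · intro a b e
        have e := congrArg Subtype.val e
        simpa [g] using e
      · rintro ⟨_ | ⟨⟨d, m⟩, _ | ⟨⟨d', m'⟩, c⟩⟩, h⟩
        · simp [sz] at h
        · simp [sz] at h; subst h; exact ⟨d, rfl⟩
        · simp [sz] at h; omega
    rw [← Nat.card_eq_of_bijective g hg]; simp
  | succ k ih =>
    rw [← Nat.card_eq_of_bijective _ (step_bij k), Nat.card_prod, ih]
    simp [pow_succ]; ring

end KNFE

theorem card_k_nfe (k : ℕ) (hk : 1 ≤ k) :
    Nat.card {f : ∀ α : Type, List α → List α // NFE f ∧ (f Unit [()]).length = k} =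
      2 * 3 ^ (k - 1) := by
  obtain ⟨k, rfl⟩ : ∃ j, k = j + 1 := ⟨k - 1, by omega⟩
  rw [Nat.add_sub_cancel, ← KNFE.card_S k]
  symm
  refine Nat.card_eq_of_bijective
    (fun c : KNFE.S (k+1) => ⟨KNFE.ev c.1, KNFE.ev_nfe c.1, (KNFE.ev_length c.1).trans c.2⟩) ⟨?_, ?_⟩
  · intro c c' e
    have e := congrArg Subtype.val e
    exact Subtype.ext (KNFE.word_inj _ _ (congrFun (congrFun e Bool) [false, true]))
  · rintro ⟨f, hf, hl⟩
    obtain ⟨c, rfl⟩ := KNFE.nfe_code hf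
    exact ⟨⟨c, (KNFE.ev_length c).symm.trans hl⟩, rfl⟩
end

section
/- Let f and g be natural filter-equivariant polymorphic list functions. If f and g agree on a single length-two list with distinct entries — say f Bool [true, false] = g Bool [true, false] — then f = g, i.e. f α xs = g α xs for every type α and every list xs : List α. In particular, a natural filter-equivariant function is fully determined by its value on one length-two example. -/
theorem eq_of_pair_filters {α : Type} [DecidableEq α] (u v : List α)
    (h : ∀ a b : α, u.filter (fun x => decide (x = a ∨ x = b))
      = v.filter (fun x => decide (x = a ∨ x = b))) : u = v := by
  induction u generalizing v with
  | nil =>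
    cases v with
    | nil => rfl
    | cons b v => have := h b b; simp at this
  | cons a u ih =>
    cases v with
    | nil => have := h a a; simp at this
    | cons b v =>
      have hab : a = b := by
        have := h a b
        simp at this
        exact this.1
      subst hab
      congr 1
      apply ih
      intro c d
      have := h c d
      by_cases hc : a = c ∨ a = d
      · simpa [List.filter_cons, hc] using this
      · simpa [List.filter_cons, hc] using this

theorem agree_short (f g : ∀ α : Type, List α → List α) (hf : NFE f) (hg : NFE g)
    (h : f Bool [true, false] = g Bool [true, false]) (α : Type) (xs : List α)
    (hx : xs.length ≤ 2) : f α xs = g α xs := by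
  match xs, hx with
  | [], _ =>
    have h1 := hf.2 α (fun _ => false) []
    have h2 := hg.2 α (fun _ => false) []
    simp at h1 h2
    rw [h1, h2]
  | [a], _ =>
    have h1 := hf.2 Bool id [true, false]
    have h2 := hg.2 Bool id [true, false]
    rw [h, ← h2] at h1
    have h3 := hf.1 Bool α (fun _ => a) [true]
    have h4 := hg.1 Bool α (fun _ => a) [true]
    simp at h1 h3 h4
    rw [h3, h4, h1]
  | [a, b], _ =>
    have h3 := hf.1 Bool α (fun t => if t then a else b) [true, false]
    have h4 := hg.1 Bool α (fun t => if t then a else b) [true, false]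
    rw [h, ← h4] at h3
    simpa using h3

theorem nfe_determined_by_one_length_two_example
    (f g : ∀ α : Type, List α → List α) (hf : NFE f) (hg : NFE g)
    (h : f Bool [true, false] = g Bool [true, false]) :
    ∀ (α : Type) (xs : List α), f α xs = g α xs := by
  intro α xs
  have key : f (Fin xs.length) (List.finRange xs.length)
      = g (Fin xs.length) (List.finRange xs.length) := by
    apply eq_of_pair_filters
    intro a b
    rw [← hf.2, ← hg.2]
    apply agree_short f g hf hg h
    have hn := (List.nodup_finRange xs.length).filter (fun x => decide (x = a ∨ x = b))
    have hs : List.filter (fun x => decide (x = a ∨ x = b)) (List.finRange xs.length)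
        ⊆ [a, b] := by
      intro x hx
      simpa using hx
    simpa using (hn.subperm hs).length_le
  have h1 := hf.1 _ _ xs.get (List.finRange xs.length)
  have h2 := hg.1 _ _ xs.get (List.finRange xs.length)
  rw [key, ← h2] at h1
  simpa only [List.map_get_finRange] using h1
end
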